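/- arXiv:1905.04497 — 3 statements merged into one kernel-verified Lean document; each statement's English description precedes it below -/
import Mathlib

section
/- Let S and E be real N×N matrices and k ≥ 0 an integer. Then the first-order expansion of (S+E)^k satisfies the remainder bound ‖(S+E)^k − S^k − Σ_{r=0}^{k−1} S^r E S^{k−r−1}‖ ≤ Σ_{r=2}^{k} (k choose r) ‖E‖^r ‖S‖^{k−r}. -/
open Matrix BigOperators

noncomputable def vnorm {N : ℕ} (x : Fin N → ℝ) : ℝ :=
  ‖(WithLp.equiv 2 (Fin N → ℝ)).symm x‖

noncomputable def opNorm {N : ℕ} (A : Matrix (Fin N) (Fin N) ℝ) : ℝ :=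
  ‖Matrix.toEuclideanCLM (𝕜 := ℝ) A‖

def IsPermMatrix {N : ℕ} (P : Matrix (Fin N) (Fin N) ℝ) : Prop :=
  (∀ i j, P i j = 0 ∨ P i j = 1) ∧ P.mulVec 1 = 1 ∧ Pᵀ.mulVec 1 = 1

noncomputable def gfilter {N : ℕ} (K : ℕ) (h : ℕ → ℝ) (S : Matrix (Fin N) (Fin N) ℝ) :
    Matrix (Fin N) (Fin N) ℝ :=
  ∑ k ∈ Finset.range (K + 1), h k • S ^ k

noncomputable def freq (K : ℕ) (h : ℕ → ℝ) (lam : ℝ) : ℝ :=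
  ∑ k ∈ Finset.range (K + 1), h k * lam ^ k

noncomputable def freqDeriv (K : ℕ) (h : ℕ → ℝ) (lam : ℝ) : ℝ :=
  ∑ k ∈ Finset.range (K + 1), (k : ℝ) * h k * lam ^ (k - 1)

lemma aux_pow {A : Type*} [NormedRing A] (h1 : ‖(1 : A)‖ ≤ 1) (S : A) (k : ℕ) :
    ‖S ^ k‖ ≤ ‖S‖ ^ k := by
  rcases Nat.eq_zero_or_pos k with rfl | h
  · simpa using h1
  · exact norm_pow_le' S h

lemma aux_step {A : Type*} [Ring A] (S E : A) (k : ℕ) :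
    ∑ r ∈ Finset.range (k + 1), S ^ r * E * S ^ (k + 1 - r - 1)
      = (∑ r ∈ Finset.range k, S ^ r * E * S ^ (k - r - 1)) * S + S ^ k * E := by
  rw [Finset.sum_range_succ, Finset.sum_mul]
  congr 1
  · refine Finset.sum_congr rfl fun r hr => ?_
    have : r < k := Finset.mem_range.mp hr
    rw [mul_assoc (S ^ r * E), ← pow_succ]
    congr 2
    omega
  · simp

lemma aux_lin {A : Type*} [NormedRing A] (h1 : ‖(1 : A)‖ ≤ 1) (S E : A) (k : ℕ) :
    ‖∑ r ∈ Finset.range k, S ^ r * E * S ^ (k - r - 1)‖ ≤ k * ‖E‖ * ‖S‖ ^ (k - 1) := by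
  have h : ∀ r ∈ Finset.range k, ‖S ^ r * E * S ^ (k - r - 1)‖ ≤ ‖E‖ * ‖S‖ ^ (k - 1) := by
    intro r hr
    have hr : r < k := Finset.mem_range.mp hr
    calc _ ≤ ‖S ^ r‖ * ‖E‖ * ‖S ^ (k - r - 1)‖ :=
          (norm_mul_le _ _).trans (by gcongr; exact norm_mul_le _ _)
      _ ≤ ‖S‖ ^ r * ‖E‖ * ‖S‖ ^ (k - r - 1) := by
          gcongr <;> exact aux_pow h1 _ _
      _ = ‖E‖ * ‖S‖ ^ (r + (k - r - 1)) := by rw [pow_add]; ring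
      _ = _ := by congr 2; omega
  refine (norm_sum_le_of_le _ h).trans (le_of_eq ?_)
  simp [mul_assoc]

lemma aux_main {A : Type*} [NormedRing A] (h1 : ‖(1 : A)‖ ≤ 1) (S E : A) (k : ℕ) :
    ‖(S + E) ^ k - S ^ k - ∑ r ∈ Finset.range k, S ^ r * E * S ^ (k - r - 1)‖
      ≤ (‖E‖ + ‖S‖) ^ k - ‖S‖ ^ k - k * ‖E‖ * ‖S‖ ^ (k - 1) := by
  induction k with
  | zero => simp
  | succ k ih =>
    rw [aux_step]
    have hl := aux_lin h1 S E k
    set L := ∑ r ∈ Finset.range k, S ^ r * E * S ^ (k - r - 1)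
    have e1 : (S + E) ^ (k + 1) - S ^ (k + 1) - (L * S + S ^ k * E)
        = ((S + E) ^ k - S ^ k - L) * (S + E) + L * E := by
      rw [pow_succ, pow_succ]; noncomm_ring
    rw [e1]
    calc _ ≤ ‖(S + E) ^ k - S ^ k - L‖ * ‖S + E‖ + ‖L‖ * ‖E‖ :=
          (norm_add_le _ _).trans (add_le_add (norm_mul_le _ _) (norm_mul_le _ _))
      _ ≤ ‖(S + E) ^ k - S ^ k - L‖ * (‖S‖ + ‖E‖) + ‖L‖ * ‖E‖ := by
          gcongr; exact norm_add_le _ _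
      _ ≤ ((‖E‖ + ‖S‖) ^ k - ‖S‖ ^ k - k * ‖E‖ * ‖S‖ ^ (k - 1)) * (‖S‖ + ‖E‖)
          + (k * ‖E‖ * ‖S‖ ^ (k - 1)) * ‖E‖ := by gcongr
      _ = _ := by
          rcases k with _ | k
          · simp
          · simp only [Nat.add_sub_cancel]; push_cast; ring

lemma aux_binom (e s : ℝ) (k : ℕ) :
    (e + s) ^ k - s ^ k - k * e * s ^ (k - 1)
      = ∑ r ∈ Finset.Icc 2 k, (k.choose r : ℝ) * e ^ r * s ^ (k - r) := by
  rcases k with _ | _ | k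
  · simp
  · simp
  · rw [add_pow, Finset.range_eq_Ico, Finset.sum_eq_sum_Ico_succ_bot (by omega),
      Finset.sum_eq_sum_Ico_succ_bot (by omega)]
    have : Finset.Icc 2 (k + 1 + 1) = Finset.Ico (0 + 1 + 1) (k + 1 + 1 + 1) := by
      ext; simp [Nat.lt_succ_iff]
    rw [this]
    have h : ∀ r ∈ Finset.Ico (0 + 1 + 1) (k + 1 + 1 + 1),
        ((k + 1 + 1).choose r : ℝ) * e ^ r * s ^ (k + 1 + 1 - r)
        = e ^ r * s ^ (k + 1 + 1 - r) * ((k + 1 + 1).choose r : ℝ) := fun r _ => by ring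
    rw [Finset.sum_congr rfl h]
    simp
    ring

/-- First-order expansion of `(S + E)^k`: the remainder after subtracting
`S^k` and the first-order term `Σ_{r<k} S^r E S^(k-r-1)` is bounded by
`Σ_{r=2}^k (k choose r) ‖E‖^r ‖S‖^(k-r)`. -/
theorem matrix_power_first_order_expansion {N : ℕ}
    (S E : Matrix (Fin N) (Fin N) ℝ) (k : ℕ) :
    opNorm ((S + E) ^ k - S ^ k - ∑ r ∈ Finset.range k, S ^ r * E * S ^ (k - r - 1))
      ≤ ∑ r ∈ Finset.Icc 2 k, (k.choose r : ℝ) * opNorm E ^ r * opNorm S ^ (k - r) := by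
  have h := aux_main (A := EuclideanSpace ℝ (Fin N) →L[ℝ] EuclideanSpace ℝ (Fin N))
    ContinuousLinearMap.norm_id_le (Matrix.toEuclideanCLM (𝕜 := ℝ) S)
    (Matrix.toEuclideanCLM (𝕜 := ℝ) E) k
  rw [aux_binom] at h
  simpa only [opNorm, map_sub, map_add, map_pow, map_sum, map_mul] using h
end

section
/- Let S be a real symmetric N×N matrix and P an N×N permutation matrix, and let σ : ℝ → ℝ be any function applied entrywise to vectors. Consider an L-layer graph neural network defined recursively as follows: the layer-0 features are x₀^g ∈ ℝ^N for g = 1,…,F₀, and for ℓ = 1,…,L the layer-ℓ features are x_ℓ^f = σ( Σ_{g=1}^{F_{ℓ−1}} H_ℓ^{fg}(S) x_{ℓ−1}^g ) for f = 1,…,F_ℓ, where each H_ℓ^{fg}(S) = Σ_{k=0}^K h_{ℓk}^{fg} S^k is a graph filter with fixed coefficients h_{ℓk}^{fg}. Let x̂_ℓ^f denote the features produced by the same recursion with S replaced by Pᵀ S P and layer-0 features Pᵀ x₀^g. Then x̂_ℓ^f = Pᵀ x_ℓ^f for every layer ℓ = 0,…,L and every feature index f; in particular, the GNN output satisfies Φ(Pᵀ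 S P, Pᵀ x) = Pᵀ Φ(S, x). -/
open Matrix BigOperators

/-- The features of a graph neural network: `F ℓ` features at layer `ℓ`, filter
coefficients `h ℓ f g` for the filter of layer `ℓ+1` mapping input feature `g`
to output feature `f`, pointwise nonlinearity `σ`, shift operator `S`, and
input features `x0`. -/
noncomputable def gnn {N : ℕ} (K : ℕ) (σ : ℝ → ℝ) (F : ℕ → ℕ)
    (h : (ℓ : ℕ) → Fin (F (ℓ + 1)) → Fin (F ℓ) → ℕ → ℝ)
    (S : Matrix (Fin N) (Fin N) ℝ) (x0 : Fin (F 0) → Fin N → ℝ) :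
    (ℓ : ℕ) → Fin (F ℓ) → Fin N → ℝ
  | 0 => x0
  | ℓ + 1 => fun f i =>
      σ ((∑ g : Fin (F ℓ), (gfilter K (h ℓ f g) S).mulVec (gnn K σ F h S x0 ℓ g)) i)

/-- Feature widths of a GNN with a single input feature, a single output
feature (at layer `L`), and `F` features in each hidden layer. -/
def Ffun (L F : ℕ) : ℕ → ℕ := fun ℓ => if ℓ = 0 ∨ L ≤ ℓ then 1 else F

theorem perm_col {N : ℕ} {P : Matrix (Fin N) (Fin N) ℝ} (hP : IsPermMatrix P) (k : Fin N) :
    ∃ p, ∀ j, P j k = if j = p then 1 else 0 := by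
  obtain ⟨h01, -, hc⟩ := hP
  have hs : ∑ j, P j k = 1 := by
    have := congrFun hc k
    simpa [Matrix.mulVec, dotProduct] using this
  have hnn : ∀ j, 0 ≤ P j k := fun j => by rcases h01 j k with h | h <;> simp [h]
  have hex : ∃ p, P p k ≠ 0 := by
    by_contra hcon
    push Not at hcon
    simp [hcon] at hs
  obtain ⟨p, hp⟩ := hex
  have hp1 : P p k = 1 := (h01 p k).resolve_left hp
  refine ⟨p, fun j => ?_⟩
  split_ifs with hj
  · rw [hj, hp1]
  · rw [← Finset.add_sum_erase _ _ (Finset.mem_univ p), hp1] at hs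
    have h0 : ∑ j ∈ Finset.univ.erase p, P j k = 0 := by linarith
    exact (Finset.sum_eq_zero_iff_of_nonneg (fun i _ => hnn i)).1 h0 j (by simp [hj])

theorem perm_mul_transpose {N : ℕ} {P : Matrix (Fin N) (Fin N) ℝ} (hP : IsPermMatrix P) :
    P * Pᵀ = 1 := by
  choose p hp using perm_col hP
  have hr := hP.2.1
  ext i j
  have hri : ∑ k, P i k = 1 := by
    have := congrFun hr i
    simpa [Matrix.mulVec, dotProduct] using this
  rw [Matrix.mul_apply, Matrix.one_apply]
  split_ifs with hij
  · subst hij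
    rw [← hri]
    refine Finset.sum_congr rfl fun k _ => ?_
    rw [Matrix.transpose_apply, hp]
    split_ifs <;> simp
  · refine Finset.sum_eq_zero fun k _ => ?_
    rw [Matrix.transpose_apply, hp, hp]
    by_cases h1 : i = p k
    · have h2 : j ≠ p k := fun h => hij (h1.trans h.symm)
      simp [h2]
    · simp [h1]

theorem gfilter_conj {N : ℕ} {P : Matrix (Fin N) (Fin N) ℝ} (hP : IsPermMatrix P)
    (K : ℕ) (h : ℕ → ℝ) (S : Matrix (Fin N) (Fin N) ℝ) :
    gfilter K h (Pᵀ * S * P) * Pᵀ = Pᵀ * gfilter K h S := by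
  have hsc : SemiconjBy Pᵀ S (Pᵀ * S * P) := by
    unfold SemiconjBy
    rw [Matrix.mul_assoc (Pᵀ * S), perm_mul_transpose hP, Matrix.mul_one]
  unfold gfilter
  rw [Finset.sum_mul, Finset.mul_sum]
  refine Finset.sum_congr rfl fun k _ => ?_
  rw [Matrix.smul_mul, Matrix.mul_smul, (hsc.pow_right k).eq]

/-- Permutation equivariance of graph neural networks: running the GNN on the
permuted shift operator `Pᵀ S P` with permuted input features `Pᵀ x₀^g`
produces, at every layer `ℓ ≤ L` and feature `f`, the permutation `Pᵀ x_ℓ^f`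
of the original features; in particular `Φ(Pᵀ S P, Pᵀ x) = Pᵀ Φ(S, x)`. -/
theorem gnn_permutation_equivariance {N K L : ℕ}
    (S P : Matrix (Fin N) (Fin N) ℝ) (hS : S.IsSymm) (hP : IsPermMatrix P)
    (σ : ℝ → ℝ) (F : ℕ → ℕ)
    (h : (ℓ : ℕ) → Fin (F (ℓ + 1)) → Fin (F ℓ) → ℕ → ℝ)
    (x0 : Fin (F 0) → Fin N → ℝ) :
    ∀ ℓ : ℕ, ℓ ≤ L → ∀ f : Fin (F ℓ),
      gnn K σ F h (Pᵀ * S * P) (fun g => Pᵀ.mulVec (x0 g)) ℓ f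
        = Pᵀ.mulVec (gnn K σ F h S x0 ℓ f) := by
  intro ℓ
  induction ℓ with
  | zero => intro _ f; rfl
  | succ ℓ ih =>
    intro hl f
    have ih' := ih (by omega)
    choose p hp using perm_col hP
    have hmv : ∀ (x : Fin N → ℝ) i, Pᵀ.mulVec x i = x (p i) := by
      intro x i
      simp [Matrix.mulVec, dotProduct, hp]
    ext i
    rw [hmv]
    simp only [gnn]
    congr 1
    refine Eq.trans ?_ (hmv _ i)
    rw [Matrix.mulVec_sum]
    refine congrFun ?_ i
    refine Finset.sum_congr rfl fun g _ => ?_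
    rw [ih', Matrix.mulVec_mulVec, Matrix.mulVec_mulVec, gfilter_conj hP]
end

section
/- Let S and Ŝ be real symmetric N×N matrices, and let σ : ℝ → ℝ satisfy |σ(b) − σ(a)| ≤ |b − a| for all a, b and σ(0) = 0, applied entrywise. Consider an L-layer graph neural network with a single input feature (F₀ = 1), a single output feature (F_L = 1), and F features in each hidden layer (F_ℓ = F for 1 ≤ ℓ ≤ L−1), defined by the recursion x_ℓ^f = σ( Σ_{g=1}^{F_{ℓ−1}} H_ℓ^{fg}(S) x_{ℓ−1}^g ), with output Φ(S, x) = x_L^1 for input x₀^1 = x. Suppose that for every layer ℓ and indices f, g, the graph filters satisfy ‖H_ℓ^{fg}(S)‖ ≤ 1, ‖H_ℓ^{fg}(Ŝ)‖ ≤ 1, and ‖H_ℓ^{fg}(S) − H_ℓ^{fg}(Ŝ)‖ ≤ Δ ε. Then for every x ∈ ℝ^N, ‖Φ(S, x) − Φ(Ŝ, x)‖ ≤ Δ L F^{L−1} ε ‖x‖; in particular, for unit-norm inputs, the perturbation of the GNN output is at most Δ L F^{L−1} ε. -/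
open Matrix BigOperators

theorem vnorm_nonneg' {N : ℕ} (x : Fin N → ℝ) : 0 ≤ vnorm x := norm_nonneg _

theorem vnorm_eq_sqrt {N : ℕ} (x : Fin N → ℝ) : vnorm x = Real.sqrt (∑ i, |x i| ^ 2) := by
  unfold vnorm
  rw [EuclideanSpace.norm_eq]
  rfl

theorem vnorm_mono {N : ℕ} (x y : Fin N → ℝ) (hxy : ∀ i, |x i| ≤ |y i|) : vnorm x ≤ vnorm y := by
  rw [vnorm_eq_sqrt, vnorm_eq_sqrt]
  apply Real.sqrt_le_sqrt
  apply Finset.sum_le_sum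
  intro i _
  exact pow_le_pow_left₀ (abs_nonneg _) (hxy i) 2

theorem vnorm_add_le {N : ℕ} (x y : Fin N → ℝ) : vnorm (x + y) ≤ vnorm x + vnorm y :=
  norm_add_le (WithLp.toLp 2 x) (WithLp.toLp 2 y)

theorem vnorm_zero' {N : ℕ} : vnorm (0 : Fin N → ℝ) = 0 :=
  norm_zero (E := EuclideanSpace ℝ (Fin N))

theorem vnorm_sum_le {N : ℕ} {ι : Type*} (s : Finset ι) (x : ι → Fin N → ℝ) :
    vnorm (∑ i ∈ s, x i) ≤ ∑ i ∈ s, vnorm (x i) :=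
  Finset.le_sum_of_subadditive vnorm (le_of_eq vnorm_zero') vnorm_add_le s x

theorem vnorm_mulVec_le {N : ℕ} (A : Matrix (Fin N) (Fin N) ℝ) (x : Fin N → ℝ) :
    vnorm (A.mulVec x) ≤ opNorm A * vnorm x :=
  (Matrix.toEuclideanCLM (𝕜 := ℝ) A).le_opNorm (WithLp.toLp 2 x)

theorem vnorm_sum_le_mul {N n : ℕ} (x : Fin n → Fin N → ℝ) (c : ℝ) (hc : ∀ i, vnorm (x i) ≤ c) :
    vnorm (∑ i, x i) ≤ n * c := by
  refine (vnorm_sum_le _ _).trans ((Finset.sum_le_sum fun i _ => hc i).trans ?_)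
  simp

theorem gnn_bound {N K : ℕ} (F : ℕ → ℕ) (S : Matrix (Fin N) (Fin N) ℝ)
    (σ : ℝ → ℝ) (hσ : ∀ a b : ℝ, |σ b - σ a| ≤ |b - a|) (hσ0 : σ 0 = 0)
    (h : (ℓ : ℕ) → Fin (F (ℓ + 1)) → Fin (F ℓ) → ℕ → ℝ)
    (h1 : ∀ ℓ f g, opNorm (gfilter K (h ℓ f g) S) ≤ 1) (x : Fin N → ℝ) (ℓ : ℕ) :
    ∀ f, vnorm (gnn K σ F h S (fun _ => x) ℓ f)
      ≤ (∏ k ∈ Finset.range ℓ, (F k : ℝ)) * vnorm x := by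
  induction ℓ with
  | zero => intro f; simp [gnn]
  | succ ℓ ih =>
    intro f
    have e1 : vnorm (gnn K σ F h S (fun _ => x) (ℓ + 1) f) ≤
        vnorm (∑ g, (gfilter K (h ℓ f g) S).mulVec (gnn K σ F h S (fun _ => x) ℓ g)) := by
      apply vnorm_mono
      intro i
      have := hσ 0 ((∑ g, (gfilter K (h ℓ f g) S).mulVec (gnn K σ F h S (fun _ => x) ℓ g)) i)
      rw [hσ0, sub_zero, sub_zero] at this
      exact this
    refine e1.trans ((vnorm_sum_le_mul _
      ((∏ k ∈ Finset.range ℓ, (F k : ℝ)) * vnorm x) ?_).trans (le_of_eq ?_))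
    · intro g
      refine (vnorm_mulVec_le _ _).trans (le_trans ?_ (ih g))
      exact mul_le_of_le_one_left (vnorm_nonneg' _) (h1 ℓ f g)
    · rw [Finset.prod_range_succ]; ring

theorem gnn_diff {N K : ℕ} (F : ℕ → ℕ) (S T : Matrix (Fin N) (Fin N) ℝ)
    (σ : ℝ → ℝ) (hσ : ∀ a b : ℝ, |σ b - σ a| ≤ |b - a|) (hσ0 : σ 0 = 0)
    (h : (ℓ : ℕ) → Fin (F (ℓ + 1)) → Fin (F ℓ) → ℕ → ℝ) (c : ℝ)
    (h1 : ∀ ℓ f g, opNorm (gfilter K (h ℓ f g) S) ≤ 1)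
    (h2 : ∀ ℓ f g, opNorm (gfilter K (h ℓ f g) T) ≤ 1)
    (h3 : ∀ ℓ f g, opNorm (gfilter K (h ℓ f g) S - gfilter K (h ℓ f g) T) ≤ c)
    (x : Fin N → ℝ) (ℓ : ℕ) :
    ∀ f, vnorm (gnn K σ F h S (fun _ => x) ℓ f - gnn K σ F h T (fun _ => x) ℓ f)
      ≤ ℓ * (∏ k ∈ Finset.range ℓ, (F k : ℝ)) * c * vnorm x := by
  induction ℓ with
  | zero => intro f; simp [gnn, vnorm_zero']
  | succ ℓ ih =>
    intro f
    set X := gnn K σ F h S (fun _ => x) ℓ with hX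
    set Y := gnn K σ F h T (fun _ => x) ℓ with hY
    have e1 : vnorm (gnn K σ F h S (fun _ => x) (ℓ + 1) f
          - gnn K σ F h T (fun _ => x) (ℓ + 1) f) ≤
        vnorm (∑ g, ((gfilter K (h ℓ f g) S).mulVec (X g)
          - (gfilter K (h ℓ f g) T).mulVec (Y g))) := by
      apply vnorm_mono
      intro i
      rw [Finset.sum_sub_distrib]
      exact hσ _ _
    refine e1.trans ((vnorm_sum_le_mul _
      ((ℓ + 1) * (∏ k ∈ Finset.range ℓ, (F k : ℝ)) * c * vnorm x) ?_).trans (le_of_eq ?_))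
    · intro g
      have e2 : (gfilter K (h ℓ f g) S).mulVec (X g) - (gfilter K (h ℓ f g) T).mulVec (Y g)
          = (gfilter K (h ℓ f g) S).mulVec (X g - Y g)
            + (gfilter K (h ℓ f g) S - gfilter K (h ℓ f g) T).mulVec (Y g) := by
        rw [Matrix.mulVec_sub, Matrix.sub_mulVec]; abel
      rw [e2]
      have hc : 0 ≤ c := (norm_nonneg _).trans (h3 ℓ f g)
      have b1 := (vnorm_mulVec_le (gfilter K (h ℓ f g) S) (X g - Y g)).trans
        (mul_le_of_le_one_left (vnorm_nonneg' _) (h1 ℓ f g))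
      have b2 := (vnorm_mulVec_le (gfilter K (h ℓ f g) S - gfilter K (h ℓ f g) T) (Y g)).trans
        (mul_le_mul (h3 ℓ f g) (gnn_bound F T σ hσ hσ0 h h2 x ℓ g) (vnorm_nonneg' _) hc)
      have b3 := ih g
      refine (vnorm_add_le _ _).trans ?_
      linarith
    · rw [Finset.prod_range_succ]; push_cast; ring

theorem prod_Ffun (F n : ℕ) :
    ∏ k ∈ Finset.range (n + 1), (Ffun (n + 1) F k : ℝ) = (F : ℝ) ^ n := by
  rw [Finset.prod_range_succ']
  have : ∀ k ∈ Finset.range n, (Ffun (n + 1) F (k + 1) : ℝ) = F := by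
    intro k hk
    have := Finset.mem_range.mp hk
    unfold Ffun
    rw [if_neg (by omega)]
  rw [Finset.prod_congr rfl this]
  simp [Ffun]

/-- Stability of GNNs: for an `L`-layer GNN with single input and output
features and `F` hidden features per layer, normalized Lipschitz nonlinearity
`σ` with `σ 0 = 0`, filters with `‖H_ℓ^{fg}(S)‖ ≤ 1`, `‖H_ℓ^{fg}(Ŝ)‖ ≤ 1`, and
`‖H_ℓ^{fg}(S) − H_ℓ^{fg}(Ŝ)‖ ≤ Δ ε`, the GNN outputs satisfy
`‖Φ(S, x) − Φ(Ŝ, x)‖ ≤ Δ L F^(L−1) ε ‖x‖`. -/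
theorem gnn_stability {N K L F : ℕ} (hL : 1 ≤ L)
    (S Shat : Matrix (Fin N) (Fin N) ℝ) (hS : S.IsSymm) (hShat : Shat.IsSymm)
    (σ : ℝ → ℝ) (hσ : ∀ a b : ℝ, |σ b - σ a| ≤ |b - a|) (hσ0 : σ 0 = 0)
    (h : (ℓ : ℕ) → Fin (Ffun L F (ℓ + 1)) → Fin (Ffun L F ℓ) → ℕ → ℝ)
    (Δ ε : ℝ)
    (hfilterS : ∀ (ℓ : ℕ) (f : Fin (Ffun L F (ℓ + 1))) (g : Fin (Ffun L F ℓ)),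
      opNorm (gfilter K (h ℓ f g) S) ≤ 1)
    (hfilterShat : ∀ (ℓ : ℕ) (f : Fin (Ffun L F (ℓ + 1))) (g : Fin (Ffun L F ℓ)),
      opNorm (gfilter K (h ℓ f g) Shat) ≤ 1)
    (hfilterdiff : ∀ (ℓ : ℕ) (f : Fin (Ffun L F (ℓ + 1))) (g : Fin (Ffun L F ℓ)),
      opNorm (gfilter K (h ℓ f g) S - gfilter K (h ℓ f g) Shat) ≤ Δ * ε) :
    ∀ x : Fin N → ℝ, ∀ f : Fin (Ffun L F L),
      vnorm (gnn K σ (Ffun L F) h S (fun _ => x) L f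
              - gnn K σ (Ffun L F) h Shat (fun _ => x) L f)
        ≤ Δ * L * (F : ℝ) ^ (L - 1) * ε * vnorm x := by
  intro x f
  refine (gnn_diff (Ffun L F) S Shat σ hσ hσ0 h (Δ * ε)
    hfilterS hfilterShat hfilterdiff x L f).trans (le_of_eq ?_)
  obtain ⟨n, rfl⟩ : ∃ n, L = n + 1 := ⟨L - 1, by omega⟩
  rw [prod_Ffun, Nat.add_sub_cancel]
  ring
end
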